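/- There exists an absolute constant C > 0 such that for every dimension d ∈ ℤ₊, every ε ∈ (0,1), every δ ∈ (0, √(log(1 + ε/(1−ε)))), every τ ∈ (0,1), and every positive integer n with n ≥ exp(C·((1/δ)·log(1 + ε/(1−ε)))²)·(d + log(1/τ))/(ε²·(1−ε)), there exists a measurable function A : (ℝ^d ∪ {⊥})ⁿ → ℝ^d such that for every μ ∈ ℝ^d and every ε-corrupted version Q of N(μ, I_d), Pr_{(x₁,…,xₙ)∼Q^⊗n}[‖A(x₁,…,xₙ) − μ‖₂ ≤ δ] ≥ 1 − τ. -/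

import Mathlib

open MeasureTheory

/-- Measurable space structure on `Option α`: a set is measurable iff its preimage
under `some` is measurable. -/
instance optionMeasurableSpace {α : Type*} [m : MeasurableSpace α] :
    MeasurableSpace (Option α) := m.map some

/-- The probability density function of the Gaussian `N(μ, I_d)` on `ℝ^d`. -/
noncomputable def mvGaussPDF (d : ℕ) (μ x : EuclideanSpace ℝ (Fin d)) : ℝ :=
  (2 * Real.pi) ^ (-(d : ℝ) / 2) * Real.exp (-‖x - μ‖ ^ 2 / 2)

/-- `Q` is an `ε`-corrupted version (realizable `ε`-contamination model) of the
distribution on `ℝ^d` with density `p`. -/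
def IsCorruptedVersion {d : ℕ} (ε : ℝ) (p : EuclideanSpace ℝ (Fin d) → ℝ)
    (Q : Measure (Option (EuclideanSpace ℝ (Fin d)))) : Prop :=
  IsProbabilityMeasure Q ∧
  ∃ f : EuclideanSpace ℝ (Fin d) → ℝ, Measurable f ∧
    (∀ x, (1 - ε) * p x ≤ f x ∧ f x ≤ p x) ∧
    (∀ A : Set (EuclideanSpace ℝ (Fin d)), MeasurableSet A →
      Q (Option.some '' A) = ENNReal.ofReal (∫ x in A, f x)) ∧
    Q {none} = ENNReal.ofReal (1 - ∫ x, f x)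

/-!
Fix a direction `u` and let `ψ` be the upper tail of the standard Gaussian along `u`. Contamination
moves the mass of a half-space by at most a factor `1 - ε = exp (-L)`, while raising the threshold
from `t` to `t + η` shrinks `ψ` by at least a factor `exp (-t η)`. With `η = δ / 4` and
`t = 1 + 4 L / δ` the second effect wins by a factor `exp (-δ / 4)`, so the number of samples in a
half-space tells, whatever the contamination, whether the mean is `η` further along `u`. The
price is that `ψ t`, hence the expected count, is only of order `exp (-O((L / δ)²))`. Chernoff's
bound makes the test reliable simultaneously over a finite family of directions that norms the
space up to a factor `2`, and any point that passes all the tests is within `4 η` of the mean.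
-/

open ProbabilityTheory Module
open scoped RealInnerProductSpace NNReal ENNReal

section NormingDirections

variable {E : Type*} [NormedAddCommGroup E]

lemma packingNumber_one_le_of_subset_closedBall_two [NormedSpace ℝ E] [FiniteDimensional ℝ E]
    {A : Set E} (hA : A ⊆ Metric.closedBall 0 2) :
    Metric.packingNumber 1 A ≤ 5 ^ finrank ℝ E := by
  have card_le (s : Finset E) (hs : (s : Set E) ⊆ A)
      (hsep : Metric.IsSeparated (1 : ℝ≥0) (s : Set E)) : s.card ≤ 5 ^ finrank ℝ E := by
    refine Besicovitch.card_le_of_separated s (fun c hc ↦ by simpa using hA (hs hc))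
      fun c hc e he hce ↦ ?_
    have h : ((1 : ℝ≥0) : ℝ≥0∞) < edist c e := hsep hc he hce
    rw [edist_dist, ENNReal.coe_one, ← ENNReal.ofReal_one,
      ENNReal.ofReal_lt_ofReal_iff_of_nonneg zero_le_one, dist_eq_norm] at h
    exact h.le
  refine iSup₂_le fun C hC ↦ iSup_le fun hsep ↦ ?_
  rcases C.finite_or_infinite with hfin | hinf
  · have h := card_le hfin.toFinset (by simpa using hC) (by simpa using hsep)
    rw [hfin.encard_eq_coe_toFinset_card]
    exact_mod_cast h
  · obtain ⟨s, hsC, hcard⟩ := hinf.exists_subset_card_eq (5 ^ finrank ℝ E + 1)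
    have h := card_le s (hsC.trans hC) (hsep.subset hsC)
    omega

variable [InnerProductSpace ℝ E]

lemma half_le_inner_of_norm_sub_le_one {x u : E} (hx : ‖x‖ = 1) (hu : ‖u‖ = 1)
    (h : ‖x - u‖ ≤ 1) : 1 / 2 ≤ ⟪x, u⟫ := by
  rw [real_inner_eq_norm_mul_self_add_norm_mul_self_sub_norm_sub_mul_self_div_two, hx, hu]
  nlinarith [norm_nonneg (x - u)]

variable (E) in
lemma exists_finset_unit_norm_le_two_mul_inner [FiniteDimensional ℝ E] :
    ∃ N : Finset E, N.card ≤ 5 ^ finrank ℝ E ∧ (∀ u ∈ N, ‖u‖ = 1) ∧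
      ∀ x ≠ 0, ∃ u ∈ N, ‖x‖ ≤ 2 * ⟪x, u⟫ := by
  have hle : Metric.packingNumber 1 (Metric.sphere (0 : E) 1) ≤ 5 ^ finrank ℝ E :=
    packingNumber_one_le_of_subset_closedBall_two <| Metric.sphere_subset_closedBall.trans <|
      Metric.closedBall_subset_closedBall one_le_two
  have hne : Metric.packingNumber 1 (Metric.sphere (0 : E) 1) ≠ ⊤ :=
    ne_top_of_le_ne_top (by exact_mod_cast ENat.natCast_ne_top (5 ^ finrank ℝ E)) hle
  set S := Metric.maximalSeparatedSet 1 (Metric.sphere (0 : E) 1)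
  have hcard : S.encard ≤ 5 ^ finrank ℝ E := (Metric.encard_maximalSeparatedSet hne).trans_le hle
  have hfin : S.Finite := Set.encard_ne_top_iff.1 <|
    Metric.encard_maximalSeparatedSet hne ▸ hne
  have hunit {u : E} (hu : u ∈ S) : ‖u‖ = 1 := by
    simpa using Metric.maximalSeparatedSet_subset hu
  refine ⟨hfin.toFinset, ?_, fun u hu ↦ hunit (hfin.mem_toFinset.1 hu), fun x hx ↦ ?_⟩
  · rw [hfin.encard_eq_coe_toFinset_card] at hcard
    exact_mod_cast hcard
  · have hx' : ‖‖x‖⁻¹ • x‖ = 1 := norm_smul_inv_norm hx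
    obtain ⟨u, hu, hxu⟩ := Metric.isCover_maximalSeparatedSet hne
      (show ‖x‖⁻¹ • x ∈ Metric.sphere (0 : E) 1 by simpa using hx')
    have hdist : ‖‖x‖⁻¹ • x - u‖ ≤ 1 := by
      rw [← dist_eq_norm, dist_edist]
      exact ENNReal.toReal_le_of_le_ofReal zero_le_one (by simpa using hxu)
    have h := half_le_inner_of_norm_sub_le_one hx' (hunit hu) hdist
    rw [real_inner_smul_left, inv_mul_eq_div, le_div_iff₀ (norm_pos_iff.2 hx)] at h
    exact ⟨u, hfin.mem_toFinset.2 hu, by linarith⟩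

end NormingDirections

section SampleCount

variable {ι Ω : Type*} [Fintype ι]

/-- The number of entries of the sample `v` that lie in `H`, as a real number. -/
noncomputable def sampleCount (H : Set Ω) (v : ι → Ω) : ℝ :=
  ∑ i, H.indicator 1 (v i)

lemma sampleCount_mono {H K : Set Ω} (h : H ⊆ K) (v : ι → Ω) :
    sampleCount H v ≤ sampleCount K v :=
  Finset.sum_le_sum fun i _ ↦
    Set.indicator_le_indicator_of_subset h (fun _ ↦ zero_le_one) (v i)

variable [MeasurableSpace Ω] {H K : Set Ω}

lemma measurable_sampleCount (hH : MeasurableSet H) :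
    Measurable (sampleCount H : (ι → Ω) → ℝ) :=
  Finset.measurable_sum _ fun i _ ↦ (measurable_one.indicator hH).comp (measurable_pi_apply i)

variable (Q : Measure Ω) [IsProbabilityMeasure Q]

lemma mgf_indicator_one (hH : MeasurableSet H) (l : ℝ) :
    mgf (H.indicator 1) Q l = 1 + Q.real H * (Real.exp l - 1) := by
  have hexp (x : Ω) : Real.exp (l * H.indicator 1 x) =
      1 + H.indicator (fun _ ↦ Real.exp l - 1) x := by
    by_cases hx : x ∈ H <;> simp [hx]
  simp_rw [mgf, hexp]
  rw [integral_add (integrable_const _) ((integrable_const _).indicator hH),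
    integral_indicator_const _ hH]
  simp

lemma mgf_sampleCount_le (hH : MeasurableSet H) (l : ℝ) :
    mgf (sampleCount H) (Measure.pi fun _ : ι ↦ Q) l ≤
      Real.exp (Fintype.card ι * (Q.real H * (Real.exp l - 1))) := by
  have hpow : mgf (sampleCount H) (Measure.pi fun _ : ι ↦ Q) l =
      mgf (H.indicator 1) Q l ^ Fintype.card ι := by
    simp_rw [mgf, sampleCount, Finset.mul_sum, Real.exp_sum]
    exact integral_fintype_prod_eq_pow (fun x ↦ Real.exp (l * H.indicator 1 x))
  rw [hpow, Real.exp_nat_mul]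
  refine pow_le_pow_left₀ mgf_nonneg ?_ _
  rw [mgf_indicator_one Q hH, add_comm]
  exact Real.add_one_le_exp _

lemma integrable_exp_mul_sampleCount (hH : MeasurableSet H) (l : ℝ) :
    Integrable (fun v ↦ Real.exp (l * sampleCount H v)) (Measure.pi fun _ : ι ↦ Q) := by
  refine integrable_exp_mul_of_mem_Icc (a := 0) (b := Fintype.card ι)
    (measurable_sampleCount hH).aemeasurable (ae_of_all _ fun v ↦ ⟨?_, ?_⟩)
  · exact Finset.sum_nonneg fun i _ ↦ Set.indicator_nonneg (fun _ _ ↦ zero_le_one) _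
  · simpa [sampleCount] using sampleCount_mono (Set.subset_univ H) v

lemma exp_sub_one_le_add_sq {x : ℝ} (hx : |x| ≤ 1) : Real.exp x - 1 ≤ x + x ^ 2 := by
  linarith [(abs_le.1 (Real.abs_exp_sub_one_sub_id_le hx)).2]

lemma measureReal_sampleCount_le_le_exp (hH : MeasurableSet H) {a κ : ℝ} (ha : 0 < a)
    (hκ : 0 ≤ κ) (hκa : κ ≤ a) (haH : a ≤ Q.real H) :
    (Measure.pi fun _ : ι ↦ Q).real {v | sampleCount H v ≤ Fintype.card ι * κ} ≤
      Real.exp (-(Fintype.card ι * ((a - κ) ^ 2 / (4 * a)))) := by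
  set l : ℝ := (a - κ) / (2 * a) with hl
  have hl0 : 0 ≤ l := div_nonneg (by linarith) (by linarith)
  have hl1 : l ≤ 1 := by rw [hl, div_le_one (by linarith)]; linarith
  have hexponent : l * κ + Q.real H * (Real.exp (-l) - 1) ≤ -((a - κ) ^ 2 / (4 * a)) := by
    calc l * κ + Q.real H * (Real.exp (-l) - 1)
        ≤ l * κ + Q.real H * (-l + l ^ 2) := by
          have h := exp_sub_one_le_add_sq (x := -l) (by rwa [abs_neg, abs_of_nonneg hl0])
          rw [neg_sq] at h
          gcongr
      _ ≤ l * κ + a * (-l + l ^ 2) := by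
          have h := mul_le_mul_of_nonpos_right haH (show -l + l ^ 2 ≤ 0 by nlinarith)
          linarith
      _ = -((a - κ) ^ 2 / (4 * a)) := by rw [hl]; field_simp; ring
  calc (Measure.pi fun _ : ι ↦ Q).real {v | sampleCount H v ≤ Fintype.card ι * κ}
      ≤ Real.exp (-(-l) * (Fintype.card ι * κ)) *
          Real.exp (Fintype.card ι * (Q.real H * (Real.exp (-l) - 1))) :=
        (measure_le_le_exp_mul_mgf _ (neg_nonpos.2 hl0)
          (integrable_exp_mul_sampleCount Q hH _)).trans
          (mul_le_mul_of_nonneg_left (mgf_sampleCount_le Q hH _) (Real.exp_pos _).le)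
    _ = Real.exp (Fintype.card ι * (l * κ + Q.real H * (Real.exp (-l) - 1))) := by
        rw [← Real.exp_add]; ring_nf
    _ ≤ Real.exp (-(Fintype.card ι * ((a - κ) ^ 2 / (4 * a)))) := by
        rw [← mul_neg]; gcongr

lemma measureReal_le_sampleCount_le_exp (hH : MeasurableSet H) {b κ : ℝ} (hκ : 0 < κ)
    (hbκ : b ≤ κ) (hHb : Q.real H ≤ b) :
    (Measure.pi fun _ : ι ↦ Q).real {v | Fintype.card ι * κ ≤ sampleCount H v} ≤
      Real.exp (-(Fintype.card ι * ((κ - b) ^ 2 / (4 * κ)))) := by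
  have hb : 0 ≤ b := measureReal_nonneg.trans hHb
  set l : ℝ := (κ - b) / (2 * κ) with hl
  have hl0 : 0 ≤ l := div_nonneg (by linarith) (by linarith)
  have hl1 : l ≤ 1 := by rw [hl, div_le_one (by linarith)]; linarith
  have hexponent : -l * κ + Q.real H * (Real.exp l - 1) ≤ -((κ - b) ^ 2 / (4 * κ)) := by
    calc -l * κ + Q.real H * (Real.exp l - 1)
        ≤ -l * κ + b * (l + l ^ 2) := by
          have h := exp_sub_one_le_add_sq (x := l) (by rwa [abs_of_nonneg hl0])
          have h0 : 0 ≤ Real.exp l - 1 := sub_nonneg.2 (Real.one_le_exp hl0)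
          gcongr
      _ ≤ -l * κ + (b * l + κ * l ^ 2) := by rw [mul_add]; gcongr
      _ = -((κ - b) ^ 2 / (4 * κ)) := by rw [hl]; field_simp; ring
  calc (Measure.pi fun _ : ι ↦ Q).real {v | Fintype.card ι * κ ≤ sampleCount H v}
      ≤ Real.exp (-l * (Fintype.card ι * κ)) *
          Real.exp (Fintype.card ι * (Q.real H * (Real.exp l - 1))) :=
        (measure_ge_le_exp_mul_mgf _ hl0 (integrable_exp_mul_sampleCount Q hH _)).trans
          (mul_le_mul_of_nonneg_left (mgf_sampleCount_le Q hH _) (Real.exp_pos _).le)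
    _ = Real.exp (Fintype.card ι * (-l * κ + Q.real H * (Real.exp l - 1))) := by
        rw [← Real.exp_add]; ring_nf
    _ ≤ Real.exp (-(Fintype.card ι * ((κ - b) ^ 2 / (4 * κ)))) := by
        rw [← mul_neg]; gcongr

lemma measureReal_compl_threshold_separates_le (hH : MeasurableSet H) (hK : MeasurableSet K)
    {a y : ℝ} (ha : 0 < a) (hy0 : 0 ≤ y) (hy1 : y ≤ 1) (haH : a ≤ Q.real H)
    (hKa : Q.real K ≤ (1 - y) * a) :
    (Measure.pi fun _ : ι ↦ Q).real
        {v | Fintype.card ι * ((1 - y / 2) * a) < sampleCount H v ∧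
          sampleCount K v < Fintype.card ι * ((1 - y / 2) * a)}ᶜ ≤
      2 * Real.exp (-(Fintype.card ι * (a * y ^ 2 / 16))) := by
  set κ := (1 - y / 2) * a with hκ
  have hκ0 : 0 < κ := mul_pos (by linarith) ha
  have hκa : κ ≤ a := by nlinarith
  have hlower : (Measure.pi fun _ : ι ↦ Q).real {v | sampleCount H v ≤ Fintype.card ι * κ} ≤
      Real.exp (-(Fintype.card ι * (a * y ^ 2 / 16))) := by
    refine (measureReal_sampleCount_le_le_exp Q hH ha hκ0.le hκa haH).trans_eq ?_
    congr 3
    rw [hκ]; field_simp; ring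
  have hupper : (Measure.pi fun _ : ι ↦ Q).real {v | Fintype.card ι * κ ≤ sampleCount K v} ≤
      Real.exp (-(Fintype.card ι * (a * y ^ 2 / 16))) := by
    have hexponent : a * y ^ 2 / 16 ≤ (κ - (1 - y) * a) ^ 2 / (4 * κ) := calc
      a * y ^ 2 / 16 = (κ - (1 - y) * a) ^ 2 / (4 * a) := by rw [hκ]; field_simp; ring
      _ ≤ (κ - (1 - y) * a) ^ 2 / (4 * κ) := by gcongr
    refine (measureReal_le_sampleCount_le_exp Q hK hκ0 (by nlinarith) hKa).trans ?_
    exact Real.exp_le_exp.2 <| neg_le_neg <| mul_le_mul_of_nonneg_left hexponent <|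
      Nat.cast_nonneg _
  rw [Set.ofPred_and, Set.compl_inter]
  simp only [Set.compl_ofPred, not_lt]
  rw [two_mul]
  exact (measureReal_union_le _ _).trans (add_le_add hlower hupper)

end SampleCount

section HalfSpace

variable {E : Type*} [NormedAddCommGroup E] [InnerProductSpace ℝ E]

/-- The open half-space of points whose component along `u` exceeds `t`. -/
def openHalfSpace (u : E) (t : ℝ) : Set E :=
  {x | t < ⟪x, u⟫}

lemma openHalfSpace_anti (u : E) {s t : ℝ} (h : s ≤ t) : openHalfSpace u t ⊆ openHalfSpace u s :=
  fun _ hx ↦ h.trans_lt hx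

variable [MeasurableSpace E] [BorelSpace E]

lemma measurableSet_openHalfSpace (u : E) (t : ℝ) : MeasurableSet (openHalfSpace u t) :=
  (isOpen_lt continuous_const (by fun_prop)).measurableSet

lemma setIntegral_openHalfSpace_add_inner {F : Type*} [NormedAddCommGroup F] [NormedSpace ℝ F]
    (ν : Measure E) [ν.IsAddRightInvariant] (u w : E) (t : ℝ) (p : E → F) :
    ∫ x in openHalfSpace u (t + ⟪w, u⟫), p x ∂ν = ∫ x in openHalfSpace u t, p (x + w) ∂ν := by
  have hpre : openHalfSpace u t = (· + w) ⁻¹' openHalfSpace u (t + ⟪w, u⟫) := by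
    ext x; simp [openHalfSpace, inner_add_left]
  rw [hpre, (measurePreserving_add_right ν w).setIntegral_preimage_emb
    (MeasurableEquiv.addRight w).measurableEmbedding]

end HalfSpace

section GaussianTail

variable {d : ℕ}

lemma integral_mvGaussPDF (μ : EuclideanSpace ℝ (Fin d)) : ∫ x, mvGaussPDF d μ x = 1 := by
  have hexp (x : EuclideanSpace ℝ (Fin d)) : -‖x‖ ^ 2 / 2 = -(1 / 2) * ‖x‖ ^ 2 := by ring
  unfold mvGaussPDF
  rw [integral_const_mul, integral_sub_right_eq_self (fun x ↦ Real.exp (-‖x‖ ^ 2 / 2)) μ]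
  simp_rw [hexp]
  rw [GaussianFourier.integral_rexp_neg_mul_sq_norm (by norm_num), finrank_euclideanSpace_fin,
    div_div_eq_mul_div, div_one, mul_comm Real.pi, ← Real.rpow_add (by positivity), neg_div,
    neg_add_cancel, Real.rpow_zero]

lemma integrable_mvGaussPDF (μ : EuclideanSpace ℝ (Fin d)) : Integrable (mvGaussPDF d μ) :=
  .of_integral_ne_zero (integral_mvGaussPDF μ ▸ one_ne_zero)

lemma mvGaussPDF_nonneg (μ x : EuclideanSpace ℝ (Fin d)) : 0 ≤ mvGaussPDF d μ x := by
  unfold mvGaussPDF; positivity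

/-- The mass that the standard Gaussian gives to the half-space at height `t` in direction `u`.
For unit vectors `u` it does not depend on `u`. -/
noncomputable def gaussianTail (u : EuclideanSpace ℝ (Fin d)) (t : ℝ) : ℝ :=
  ∫ x in openHalfSpace u t, mvGaussPDF d 0 x

lemma setIntegral_openHalfSpace_mvGaussPDF (u μ : EuclideanSpace ℝ (Fin d)) (t : ℝ) :
    ∫ x in openHalfSpace u (t + ⟪μ, u⟫), mvGaussPDF d μ x = gaussianTail u t := by
  rw [setIntegral_openHalfSpace_add_inner, gaussianTail]
  simp [mvGaussPDF]

lemma gaussianTail_le_one (u : EuclideanSpace ℝ (Fin d)) (t : ℝ) : gaussianTail u t ≤ 1 :=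
  integral_mvGaussPDF (d := d) 0 ▸
    setIntegral_le_integral (integrable_mvGaussPDF _) (ae_of_all _ (mvGaussPDF_nonneg _))

lemma one_le_gaussianTail_neg_add (u : EuclideanSpace ℝ (Fin d)) {s t : ℝ} (h : s < t) :
    1 ≤ gaussianTail u (-t) + gaussianTail (-u) s := by
  have hp := integrable_mvGaussPDF (d := d) 0
  have hsub : (openHalfSpace u (-t))ᶜ ⊆ openHalfSpace (-u) s := fun x hx ↦ by
    simp only [openHalfSpace, Set.mem_compl_iff, Set.mem_ofPred_eq, not_lt, inner_neg_right] at hx ⊢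
    linarith
  rw [← integral_mvGaussPDF (d := d) 0,
    ← integral_add_compl (measurableSet_openHalfSpace u (-t)) hp]
  exact add_le_add_right (setIntegral_mono_set hp.integrableOn
    (ae_of_all _ (mvGaussPDF_nonneg _)) hsub.eventuallyLE) _

variable {u : EuclideanSpace ℝ (Fin d)} (hu : ‖u‖ = 1)
include hu

lemma mvGaussPDF_zero_add_smul (x : EuclideanSpace ℝ (Fin d)) (s : ℝ) :
    mvGaussPDF d 0 (x + s • u) =
      Real.exp (-(s * ⟪x, u⟫) - s ^ 2 / 2) * mvGaussPDF d 0 x := by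
  unfold mvGaussPDF
  rw [mul_left_comm, ← Real.exp_add, sub_zero, sub_zero, norm_add_sq_real, norm_smul, hu,
    inner_smul_right, mul_one, Real.norm_eq_abs, sq_abs]
  ring_nf

lemma gaussianTail_add (t s : ℝ) :
    gaussianTail u (t + s) = ∫ x in openHalfSpace u t, mvGaussPDF d 0 (x + s • u) := by
  rw [← setIntegral_openHalfSpace_add_inner, real_inner_smul_left, real_inner_self_eq_norm_sq, hu,
    one_pow, mul_one, gaussianTail]

lemma gaussianTail_add_le (t : ℝ) {s : ℝ} (hs : 0 ≤ s) :
    gaussianTail u (t + s) ≤ Real.exp (-(s * t) - s ^ 2 / 2) * gaussianTail u t := by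
  have hp := integrable_mvGaussPDF (d := d) 0
  rw [gaussianTail_add hu, gaussianTail, ← integral_const_mul]
  refine setIntegral_mono_on (hp.comp_add_right _).integrableOn (hp.const_mul _).integrableOn
    (measurableSet_openHalfSpace u t) fun x hx ↦ ?_
  rw [mvGaussPDF_zero_add_smul hu]
  have hx' : t ≤ ⟪x, u⟫ := le_of_lt hx
  have := mvGaussPDF_nonneg 0 x
  gcongr

lemma le_gaussianTail_add {t w s : ℝ} (htw : t ≤ w) (hs : 0 ≤ s) :
    Real.exp (-(s * w) - s ^ 2 / 2) * (gaussianTail u t - gaussianTail u w) ≤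
      gaussianTail u (t + s) := by
  have hp := integrable_mvGaussPDF (d := d) 0
  have hps := hp.comp_add_right (s • u)
  have hdiff : gaussianTail u t - gaussianTail u w =
      ∫ x in openHalfSpace u t \ openHalfSpace u w, mvGaussPDF d 0 x :=
    (setIntegral_sdiff (measurableSet_openHalfSpace u w) hp.integrableOn
      (openHalfSpace_anti u htw)).symm
  calc Real.exp (-(s * w) - s ^ 2 / 2) * (gaussianTail u t - gaussianTail u w)
      = ∫ x in openHalfSpace u t \ openHalfSpace u w,
          Real.exp (-(s * w) - s ^ 2 / 2) * mvGaussPDF d 0 x := by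
        rw [hdiff, integral_const_mul]
    _ ≤ ∫ x in openHalfSpace u t \ openHalfSpace u w, mvGaussPDF d 0 (x + s • u) := by
        refine setIntegral_mono_on (hp.const_mul _).integrableOn hps.integrableOn
          ((measurableSet_openHalfSpace u t).diff (measurableSet_openHalfSpace u w))
          fun x hx ↦ ?_
        rw [mvGaussPDF_zero_add_smul hu]
        have hx' : ⟪x, u⟫ ≤ w := not_lt.1 hx.2
        have := mvGaussPDF_nonneg 0 x
        gcongr
    _ ≤ ∫ x in openHalfSpace u t, mvGaussPDF d 0 (x + s • u) :=
        setIntegral_mono_set hps.integrableOn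
          (ae_of_all _ fun x ↦ mvGaussPDF_nonneg 0 _) Set.sdiff_subset.eventuallyLE
    _ = gaussianTail u (t + s) := (gaussianTail_add hu t s).symm

lemma gaussianTail_le_exp {s : ℝ} (hs : 0 ≤ s) : gaussianTail u s ≤ Real.exp (-s ^ 2 / 2) := by
  have h := gaussianTail_add_le hu 0 hs
  rw [zero_add, mul_zero, neg_zero, zero_sub, ← neg_div] at h
  exact h.trans (mul_le_of_le_one_right (Real.exp_pos _).le (gaussianTail_le_one u 0))

-- Translate the slab `-3 < ⟪x, u⟫ ≤ 2`, whose mass is at least `exp (-2)`, by `t + 3`.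
lemma exp_le_gaussianTail {t : ℝ} (ht : -3 ≤ t) :
    Real.exp (-(t + 5) ^ 2 / 2) ≤ gaussianTail u t := by
  have hslab : Real.exp (-2) ≤ gaussianTail u (-3) - gaussianTail u 2 := by
    have hcover := one_le_gaussianTail_neg_add u (show (2 : ℝ) < 3 by norm_num)
    have hright := gaussianTail_le_exp hu zero_le_two
    have hleft := gaussianTail_le_exp (u := -u) (by rwa [norm_neg]) zero_le_two
    have hthree : 3 * Real.exp (-2) ≤ 1 := by
      rw [Real.exp_neg, ← div_eq_mul_inv, div_le_one (Real.exp_pos 2)]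
      linarith [Real.add_one_le_exp 2]
    rw [show -(2 : ℝ) ^ 2 / 2 = -2 by norm_num] at hright hleft
    linarith
  calc Real.exp (-(t + 5) ^ 2 / 2)
      = Real.exp (-((t + 3) * 2) - (t + 3) ^ 2 / 2) * Real.exp (-2) := by
        rw [← Real.exp_add]; ring_nf
    _ ≤ Real.exp (-((t + 3) * 2) - (t + 3) ^ 2 / 2) * (gaussianTail u (-3) - gaussianTail u 2) := by
        gcongr
    _ ≤ gaussianTail u (-3 + (t + 3)) := le_gaussianTail_add hu (by norm_num) (by linarith)
    _ = gaussianTail u t := by ring_nf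

end GaussianTail

lemma measurableSet_some_image {α : Type*} [MeasurableSpace α] {s : Set α}
    (hs : MeasurableSet s) : MeasurableSet (some '' s) := by
  change MeasurableSet (some ⁻¹' (some '' s))
  rwa [Set.preimage_image_eq _ (Option.some_injective α)]

namespace IsCorruptedVersion

variable {d : ℕ} {ε : ℝ} {p : EuclideanSpace ℝ (Fin d) → ℝ}
  {Q : Measure (Option (EuclideanSpace ℝ (Fin d)))} {s : Set (EuclideanSpace ℝ (Fin d))}

lemma real_some_image_mem_Icc (hQ : IsCorruptedVersion ε p Q) (hε : ε ≤ 1) (hp0 : ∀ x, 0 ≤ p x)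
    (hp : Integrable p) (hs : MeasurableSet s) :
    Q.real (some '' s) ∈ Set.Icc ((1 - ε) * ∫ x in s, p x) (∫ x in s, p x) := by
  obtain ⟨-, f, hf, hfp, hQs, -⟩ := hQ
  have hf0 (x) : 0 ≤ f x := (mul_nonneg (sub_nonneg.2 hε) (hp0 x)).trans (hfp x).1
  have hfi : Integrable f := hp.mono' hf.aestronglyMeasurable <|
    ae_of_all _ fun x ↦ (Real.norm_of_nonneg (hf0 x)).trans_le (hfp x).2
  rw [Measure.real, hQs s hs, ENNReal.toReal_ofReal (integral_nonneg hf0), ← integral_const_mul]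
  exact ⟨setIntegral_mono (hp.const_mul _).integrableOn hfi.integrableOn fun x ↦ (hfp x).1,
    setIntegral_mono hfi.integrableOn hp.integrableOn fun x ↦ (hfp x).2⟩

lemma real_openHalfSpace_mem_Icc {μ : EuclideanSpace ℝ (Fin d)}
    (hQ : IsCorruptedVersion ε (mvGaussPDF d μ) Q) (hε : ε ≤ 1)
    (u : EuclideanSpace ℝ (Fin d)) (t : ℝ) :
    Q.real (some '' openHalfSpace u (t + ⟪μ, u⟫)) ∈
      Set.Icc ((1 - ε) * gaussianTail u t) (gaussianTail u t) := by
  rw [← setIntegral_openHalfSpace_mvGaussPDF u μ t]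
  exact hQ.real_some_image_mem_Icc hε (mvGaussPDF_nonneg μ) (integrable_mvGaussPDF μ)
    (measurableSet_openHalfSpace _ _)

end IsCorruptedVersion

lemma exists_measurable_choice {Ω X : Type*} [MeasurableSpace Ω] [MeasurableSpace X]
    (q : ℕ → X) {P : X → Set Ω}
    (hP : ∀ k, MeasurableSet (P (q k))) :
    ∃ A : Ω → X, Measurable A ∧ ∀ k, ∀ ω ∈ P (q k), ω ∈ P (A ω) := by
  classical
  have hex (ω : Ω) : ∃ k, ω ∈ P (q k) ∪ (⋃ j, P (q j))ᶜ := by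
    by_cases h : ω ∈ ⋃ j, P (q j)
    · obtain ⟨k, hk⟩ := Set.mem_iUnion.1 h
      exact ⟨k, .inl hk⟩
    · exact ⟨0, .inr h⟩
  refine ⟨fun ω ↦ q (Nat.find (hex ω)), measurable_from_nat.comp <|
    measurable_find hex fun k ↦ (hP k).union (MeasurableSet.iUnion hP).compl, fun k ω hk ↦ ?_⟩
  exact (Nat.find_spec (hex ω)).resolve_right (not_not.2 (Set.mem_iUnion.2 ⟨k, hk⟩))

section Estimator

variable {ι E : Type*} [Fintype ι] [NormedAddCommGroup E] [InnerProductSpace ℝ E]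

/-- The number of observed (that is, not `none`) samples whose component along `u` exceeds `t`. -/
noncomputable def tailCount (u : E) (t : ℝ) (v : ι → Option E) : ℝ :=
  sampleCount (some '' openHalfSpace u t) v

lemma tailCount_anti (u : E) (v : ι → Option E) : Antitone fun t ↦ tailCount u t v :=
  fun _ _ h ↦ sampleCount_mono (Set.image_mono (openHalfSpace_anti u h)) v

/-- The event that, in every direction `u ∈ N`, the tail counts above the heights `s` and `t`,
measured from `μ`, lie strictly on either side of the threshold `θ u`. Under the true mean `μ` this
is the typical behaviour of the sample. -/
def thresholdSeparates (N : Finset E) (θ : E → ℝ) (s t : ℝ) (μ : E) : Set (ι → Option E) :=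
  {v | ∀ u ∈ N, θ u < tailCount u (s + ⟪μ, u⟫) v ∧ tailCount u (t + ⟪μ, u⟫) v < θ u}

lemma norm_sub_le_of_mem_thresholdSeparates {N : Finset E}
    (hN : ∀ x ≠ 0, ∃ u ∈ N, ‖x‖ ≤ 2 * ⟪x, u⟫) {θ : E → ℝ} {r s t : ℝ} (hrt : r ≤ t) {μ q : E}
    {v : ι → Option E} (hv : v ∈ thresholdSeparates N θ s t μ)
    (hq : ∀ u ∈ N, θ u < tailCount u (r + ⟪q, u⟫) v) : ‖q - μ‖ ≤ 2 * (t - r) := by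
  rcases eq_or_ne (q - μ) 0 with h0 | h0
  · rw [h0, norm_zero]; linarith
  obtain ⟨u, hu, hle⟩ := hN _ h0
  have hlt : r + ⟪q, u⟫ < t + ⟪μ, u⟫ :=
    (tailCount_anti u v).reflect_lt ((hv u hu).2.trans (hq u hu))
  rw [inner_sub_left] at hle
  linarith

variable [MeasurableSpace E] [BorelSpace E]

lemma measurable_tailCount (u : E) (t : ℝ) :
    Measurable (tailCount u t : (ι → Option E) → ℝ) :=
  measurable_sampleCount (measurableSet_some_image (measurableSet_openHalfSpace u t))

lemma measurableSet_thresholdSeparates (N : Finset E) (θ : E → ℝ) (s t : ℝ) (μ : E) :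
    MeasurableSet (thresholdSeparates N θ s t μ : Set (ι → Option E)) := by
  simp only [thresholdSeparates, Set.ofPred_forall]
  exact N.measurableSet_biInter fun u _ ↦
    (measurableSet_lt measurable_const (measurable_tailCount u _)).inter
      (measurableSet_lt (measurable_tailCount u _) measurable_const)

lemma exists_measurable_estimator [TopologicalSpace.SeparableSpace E] {N : Finset E}
    (hunit : ∀ u ∈ N, ‖u‖ ≤ 1) (hN : ∀ x ≠ 0, ∃ u ∈ N, ‖x‖ ≤ 2 * ⟪x, u⟫) (θ : E → ℝ)
    (t : ℝ) {η : ℝ} (hη : 0 < η) :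
    ∃ A : (ι → Option E) → E, Measurable A ∧
      ∀ μ, ∀ v ∈ thresholdSeparates N θ t (t + η) μ, ‖A v - μ‖ ≤ 4 * η := by
  let P (q : E) : Set (ι → Option E) := {v | ∀ u ∈ N, θ u < tailCount u (t - η + ⟪q, u⟫) v}
  have hP (q : E) : MeasurableSet (P q) := by
    simp only [P, Set.ofPred_forall]
    exact N.measurableSet_biInter fun u _ ↦
      measurableSet_lt measurable_const (measurable_tailCount u _)
  obtain ⟨A, hA, hAP⟩ := exists_measurable_choice (TopologicalSpace.denseSeq E) fun k ↦ hP _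
  refine ⟨A, hA, fun μ v hv ↦ ?_⟩
  obtain ⟨k, hk⟩ := (TopologicalSpace.denseRange_denseSeq E).exists_dist_lt μ hη
  set q := TopologicalSpace.denseSeq E k
  have hqP : v ∈ P q := fun u hu ↦ by
    refine (hv u hu).1.trans_le (tailCount_anti u v ?_)
    have hinner : ⟪q - μ, u⟫ ≤ η := calc
      ⟪q - μ, u⟫ ≤ ‖q - μ‖ * ‖u‖ := real_inner_le_norm _ _
      _ ≤ ‖q - μ‖ := mul_le_of_le_one_right (norm_nonneg _) (hunit u hu)
      _ ≤ η := by rw [← dist_eq_norm, dist_comm]; exact hk.le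
    rw [inner_sub_left] at hinner
    linarith
  have h := norm_sub_le_of_mem_thresholdSeparates hN (by linarith) hv (hAP k v hqP)
  linarith

end Estimator

section SampleComplexity

variable {d : ℕ} {ε δ L τ : ℝ}

lemma gaussianTail_add_le_exp_mul {u : EuclideanSpace ℝ (Fin d)} (hu : ‖u‖ = 1) (hδ : 0 < δ)
    (hL : Real.exp (-L) = 1 - ε) :
    gaussianTail u (1 + 4 * (L / δ) + δ / 4) ≤
      Real.exp (-(δ / 4)) * ((1 - ε) * gaussianTail u (1 + 4 * (L / δ))) := by
  refine (gaussianTail_add_le hu _ (by positivity)).trans ?_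
  rw [← hL, ← mul_assoc, ← Real.exp_add]
  gcongr
  · exact integral_nonneg (mvGaussPDF_nonneg 0)
  · have hcancel : δ / 4 * (1 + 4 * (L / δ)) = δ / 4 + L := by field_simp
    nlinarith [sq_nonneg (δ / 4)]

lemma exp_le_gaussianTail_one_add {u : EuclideanSpace ℝ (Fin d)} (hu : ‖u‖ = 1) {r : ℝ}
    (hr : 0 ≤ r) : Real.exp (-(36 + 16 * r ^ 2)) ≤ gaussianTail u (1 + 4 * r) := by
  refine le_trans (Real.exp_le_exp.2 ?_) (exp_le_gaussianTail hu (by linarith))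
  nlinarith [sq_nonneg (6 - 4 * r)]

lemma exists_measureReal_compl_thresholdSeparates_le (ι : Type*) [Fintype ι]
    {N : Finset (EuclideanSpace ℝ (Fin d))} (hN : ∀ u ∈ N, ‖u‖ = 1) (hδ : 0 < δ) (hL0 : 0 ≤ L)
    (hL : Real.exp (-L) = 1 - ε) :
    ∃ θ : EuclideanSpace ℝ (Fin d) → ℝ, ∀ μ Q, IsCorruptedVersion ε (mvGaussPDF d μ) Q →
      (Measure.pi fun _ : ι ↦ Q).real
          (thresholdSeparates N θ (1 + 4 * (L / δ)) (1 + 4 * (L / δ) + δ / 4) μ)ᶜ ≤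
        N.card * (2 * Real.exp (-(Fintype.card ι * ((1 - ε) *
          Real.exp (-(36 + 16 * (L / δ) ^ 2)) * (1 - Real.exp (-(δ / 4))) ^ 2 / 16)))) := by
  have hε : 0 < 1 - ε := hL ▸ Real.exp_pos _
  have hy : Real.exp (-(δ / 4)) ≤ 1 := Real.exp_le_one_iff.2 (by linarith)
  refine ⟨fun u ↦ Fintype.card ι * ((1 - (1 - Real.exp (-(δ / 4))) / 2) *
    ((1 - ε) * gaussianTail u (1 + 4 * (L / δ)))), fun μ Q hQ ↦ ?_⟩
  have : IsProbabilityMeasure Q := hQ.1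
  have hmass (u : EuclideanSpace ℝ (Fin d)) (t : ℝ) :=
    hQ.real_openHalfSpace_mem_Icc (by linarith) u t
  have hmeas (u : EuclideanSpace ℝ (Fin d)) (t : ℝ) :=
    measurableSet_some_image (measurableSet_openHalfSpace u t)
  simp only [thresholdSeparates, Set.ofPred_forall, Set.compl_iInter]
  rw [← nsmul_eq_mul, ← Finset.sum_const]
  refine (measureReal_biUnion_finset_le N _).trans (Finset.sum_le_sum fun u hu ↦ ?_)
  have htail := exp_le_gaussianTail_one_add (hN u hu) (r := L / δ) (by positivity)
  refine (measureReal_compl_threshold_separates_le Q (hmeas u _) (hmeas u _)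
    (mul_pos hε ((Real.exp_pos _).trans_le htail)) (sub_nonneg.2 hy)
    (sub_le_self _ (Real.exp_pos _).le) (hmass u _).1 ?_).trans ?_
  · rw [sub_sub_cancel]
    exact (hmass u _).2.trans (gaussianTail_add_le_exp_mul (hN u hu) hδ hL)
  · gcongr

lemma five_pow_mul_two_mul_exp_le (hd : 0 < d) (hτ : τ ∈ Set.Ioo (0 : ℝ) 1) :
    5 ^ d * (2 * Real.exp (-(4 * (d + Real.log (1 / τ))))) ≤ τ := by
  have hpow : (5 : ℝ) ^ d * 2 ≤ Real.exp (4 * d) := calc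
    (5 : ℝ) ^ d * 2 ≤ 5 ^ d * 2 ^ d := by gcongr; exact le_self_pow₀ one_le_two hd.ne'
    _ = 10 ^ d := by rw [← mul_pow]; norm_num
    _ ≤ Real.exp 4 ^ d := by
        gcongr; linarith [Real.quadratic_le_exp_of_nonneg (x := 4) (by norm_num)]
    _ = Real.exp (4 * d) := by rw [← Real.exp_nat_mul, mul_comm]
  calc 5 ^ d * (2 * Real.exp (-(4 * (d + Real.log (1 / τ)))))
      ≤ Real.exp (4 * d) * Real.exp (-(4 * (d + Real.log (1 / τ)))) := by
        rw [← mul_assoc]; gcongr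
    _ = Real.exp (4 * Real.log τ) := by
        rw [← Real.exp_add, one_div, Real.log_inv]; ring_nf
    _ ≤ Real.exp (Real.log τ) := by gcongr; linarith [Real.log_neg hτ.1 hτ.2]
    _ = τ := Real.exp_log hτ.1

theorem exists_estimator_of_le_mul (hd : 0 < d) {n : ℕ} (hδ : 0 < δ) (hL0 : 0 ≤ L)
    (hL : Real.exp (-L) = 1 - ε) (hτ : τ ∈ Set.Ioo (0 : ℝ) 1)
    (hn : 64 * (d + Real.log (1 / τ)) ≤
      n * ((1 - ε) * Real.exp (-(36 + 16 * (L / δ) ^ 2)) * (1 - Real.exp (-(δ / 4))) ^ 2)) :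
    ∃ A : (Fin n → Option (EuclideanSpace ℝ (Fin d))) → EuclideanSpace ℝ (Fin d),
      Measurable A ∧ ∀ μ Q, IsCorruptedVersion ε (mvGaussPDF d μ) Q →
        1 - τ ≤ (Measure.pi fun _ : Fin n ↦ Q).real {v | ‖A v - μ‖ ≤ δ} := by
  obtain ⟨N, hcard, hunit, hN⟩ :=
    exists_finset_unit_norm_le_two_mul_inner (EuclideanSpace ℝ (Fin d))
  rw [finrank_euclideanSpace_fin] at hcard
  obtain ⟨θ, hfail⟩ :=
    exists_measureReal_compl_thresholdSeparates_le (Fin n) hunit hδ hL0 hL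
  obtain ⟨A, hA, hAμ⟩ := exists_measurable_estimator (ι := Fin n) (fun u hu ↦ (hunit u hu).le) hN θ
    (1 + 4 * (L / δ)) (η := δ / 4) (by positivity)
  refine ⟨A, hA, fun μ Q hQ ↦ ?_⟩
  have : IsProbabilityMeasure Q := hQ.1
  have hτ' := calc
    _ ≤ _ := hfail μ Q hQ
    _ ≤ (5 : ℝ) ^ d * (2 * Real.exp (-(4 * (d + Real.log (1 / τ))))) := by
        rw [Fintype.card_fin]
        refine mul_le_mul (by exact_mod_cast hcard) ?_ (by positivity) (by positivity)
        refine mul_le_mul_of_nonneg_left (Real.exp_le_exp.2 (neg_le_neg ?_)) zero_le_two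
        linarith
    _ ≤ τ := five_pow_mul_two_mul_exp_le hd hτ
  rw [probReal_compl_eq_one_sub (measurableSet_thresholdSeparates ..)] at hτ'
  refine (sub_le_comm.1 hτ').trans (measureReal_mono fun v hv ↦ ?_)
  exact (hAμ μ v hv).trans_eq (by ring)

lemma log_one_add_div_one_sub (hε : ε < 1) : Real.log (1 + ε / (1 - ε)) = -Real.log (1 - ε) := by
  have : 1 - ε ≠ 0 := (sub_pos.2 hε).ne'
  rw [← Real.log_inv]; congr 1; field_simp; ring

lemma le_neg_log_one_sub (hε : ε < 1) : ε ≤ -Real.log (1 - ε) := by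
  linarith [Real.log_le_sub_one_of_pos (sub_pos.2 hε)]

lemma sqrt_le_div_of_le (hε0 : 0 < ε) (hε1 : ε ≤ 1) (hεL : ε ≤ L) : √L ≤ L / ε := by
  have hε : ε ≤ √L := Real.le_sqrt_of_sq_le (by nlinarith)
  rw [le_div_iff₀ hε0]
  calc √L * ε ≤ √L * √L := by gcongr
    _ = L := Real.mul_self_sqrt (hε0.le.trans hεL)

lemma div_one_add_le_one_sub_exp_neg {x : ℝ} (hx : 0 ≤ x) : x / (1 + x) ≤ 1 - Real.exp (-x) := by
  have hinv : Real.exp (-x) ≤ (1 + x)⁻¹ := by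
    rw [Real.exp_neg]
    exact inv_anti₀ (by linarith) (by linarith [Real.add_one_le_exp x])
  calc x / (1 + x) = 1 - (1 + x)⁻¹ := by field_simp; ring
    _ ≤ 1 - Real.exp (-x) := by linarith

lemma le_five_mul_one_sub_exp (hδ : 0 < δ) (hL0 : 0 ≤ L) (hεL : ε ≤ L) (hδL : δ * ε ≤ L) :
    ε ≤ 5 * (L / δ) * (1 - Real.exp (-(δ / 4))) := by
  calc ε ≤ 5 * L / (4 + δ) := by rw [le_div_iff₀ (by linarith)]; linarith
    _ = 5 * (L / δ) * (δ / 4 / (1 + δ / 4)) := by field_simp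
    _ ≤ 5 * (L / δ) * (1 - Real.exp (-(δ / 4))) := by
        gcongr; exact div_one_add_le_one_sub_exp_neg (by positivity)

lemma sixtyFour_mul_sq_le_exp_mul (hε : 0 ≤ ε) (hδ : 0 < δ) (hεL : ε ≤ L) (hδL : δ * ε ≤ L) :
    64 * ε ^ 2 ≤ Real.exp ((16 + 1600 * Real.exp 36) * (L / δ) ^ 2) *
      (Real.exp (-(36 + 16 * (L / δ) ^ 2)) * (1 - Real.exp (-(δ / 4))) ^ 2) := by
  set r := L / δ
  calc 64 * ε ^ 2 ≤ 64 * (5 * r * (1 - Real.exp (-(δ / 4)))) ^ 2 := by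
        gcongr; exact le_five_mul_one_sub_exp hδ (hε.trans hεL) hεL hδL
    _ = 1600 * Real.exp 36 * r ^ 2 * (Real.exp (-36) * (1 - Real.exp (-(δ / 4))) ^ 2) := by
        rw [Real.exp_neg 36]; field_simp; ring
    _ ≤ Real.exp (1600 * Real.exp 36 * r ^ 2) *
          (Real.exp (-36) * (1 - Real.exp (-(δ / 4))) ^ 2) := by
        gcongr; linarith [Real.add_one_le_exp (1600 * Real.exp 36 * r ^ 2)]
    _ = Real.exp ((16 + 1600 * Real.exp 36) * r ^ 2) *
          (Real.exp (-(36 + 16 * r ^ 2)) * (1 - Real.exp (-(δ / 4))) ^ 2) := by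
        rw [← mul_assoc, ← mul_assoc, ← Real.exp_add, ← Real.exp_add]; ring_nf

end SampleComplexity

theorem stmt12_general :
    ∃ C : ℝ, 0 < C ∧
      ∀ (d : ℕ) (ε δ τ : ℝ) (n : ℕ), 0 < d →
        ε ∈ Set.Ioo (0 : ℝ) 1 →
        δ ∈ Set.Ioc 0 (Real.log (1 + ε / (1 - ε)) / ε) →
        τ ∈ Set.Ioo (0 : ℝ) 1 →
        (n : ℝ) ≥ Real.exp (C * ((1 / δ) * Real.log (1 + ε / (1 - ε))) ^ 2) *
            ((d : ℝ) + Real.log (1 / τ)) / (ε ^ 2 * (1 - ε)) →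
        ∃ A : (Fin n → Option (EuclideanSpace ℝ (Fin d))) → EuclideanSpace ℝ (Fin d),
          Measurable A ∧
          ∀ (μ : EuclideanSpace ℝ (Fin d)) (Q : Measure (Option (EuclideanSpace ℝ (Fin d)))),
            IsCorruptedVersion ε (mvGaussPDF d μ) Q →
            ((Measure.pi fun _ : Fin n => Q) {v | ‖A v - μ‖ ≤ δ}).toReal ≥ 1 - τ := by
  refine ⟨16 + 1600 * Real.exp 36, by positivity,
    fun d ε δ τ n hd ⟨hε0, hε1⟩ ⟨hδ, hδε⟩ hτ hn ↦ ?_⟩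
  have hεL := le_neg_log_one_sub hε1
  have hε1' : 0 < 1 - ε := sub_pos.2 hε1
  rw [log_one_add_div_one_sub hε1] at hδε hn
  set L := -Real.log (1 - ε) with hLdef
  have hL : Real.exp (-L) = 1 - ε := by rw [hLdef, neg_neg, Real.exp_log hε1']
  refine exists_estimator_of_le_mul hd hδ (hε0.le.trans hεL) hL hτ ?_
  rw [one_div_mul_eq_div, ge_iff_le, div_le_iff₀ (by positivity)] at hn
  have hD : 0 ≤ d + Real.log (1 / τ) :=
    add_nonneg d.cast_nonneg (Real.log_nonneg (one_le_one_div hτ.1 hτ.2.le))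
  set w := Real.exp (-(36 + 16 * (L / δ) ^ 2)) * (1 - Real.exp (-(δ / 4))) ^ 2 with hw
  refine le_of_mul_le_mul_right ?_ (pow_pos hε0 2)
  calc 64 * (d + Real.log (1 / τ)) * ε ^ 2 = 64 * ε ^ 2 * (d + Real.log (1 / τ)) := by ring
    _ ≤ Real.exp ((16 + 1600 * Real.exp 36) * (L / δ) ^ 2) * w * (d + Real.log (1 / τ)) :=
        mul_le_mul_of_nonneg_right
          (sixtyFour_mul_sq_le_exp_mul hε0.le hδ hεL ((le_div_iff₀ hε0).1 hδε)) hD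
    _ = Real.exp ((16 + 1600 * Real.exp 36) * (L / δ) ^ 2) * (d + Real.log (1 / τ)) * w := by ring
    _ ≤ n * (ε ^ 2 * (1 - ε)) * w := by gcongr
    _ = n * ((1 - ε) * Real.exp (-(36 + 16 * (L / δ) ^ 2)) *
          (1 - Real.exp (-(δ / 4))) ^ 2) * ε ^ 2 := by rw [hw]; ring

/-- Sample complexity upper bound (multivariate): there is an absolute constant `C > 0`
such that for all `d ≥ 1`, `ε ∈ (0,1)`, `δ ∈ (0, √log(1 + ε/(1−ε)))`, `τ ∈ (0,1)` and
`n ≥ exp(C·((1/δ)·log(1 + ε/(1−ε)))²)·(d + log(1/τ))/(ε²(1−ε))`, there exists an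
estimator on `n` samples which, for every `μ ∈ ℝ^d` and every `ε`-corrupted version `Q`
of `N(μ, I_d)`, estimates `μ` to within `δ` in Euclidean norm with probability at least
`1 − τ` under `Q^⊗n`. -/
theorem stmt12 :
    ∃ C : ℝ, 0 < C ∧
      ∀ (d : ℕ) (ε δ τ : ℝ) (n : ℕ), 0 < d →
        ε ∈ Set.Ioo (0 : ℝ) 1 →
        δ ∈ Set.Ioo 0 (Real.sqrt (Real.log (1 + ε / (1 - ε)))) →
        τ ∈ Set.Ioo (0 : ℝ) 1 → 0 < n →
        (n : ℝ) ≥ Real.exp (C * ((1 / δ) * Real.log (1 + ε / (1 - ε))) ^ 2) *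
            ((d : ℝ) + Real.log (1 / τ)) / (ε ^ 2 * (1 - ε)) →
        ∃ A : (Fin n → Option (EuclideanSpace ℝ (Fin d))) → EuclideanSpace ℝ (Fin d),
          Measurable A ∧
          ∀ (μ : EuclideanSpace ℝ (Fin d)) (Q : Measure (Option (EuclideanSpace ℝ (Fin d)))),
            IsCorruptedVersion ε (mvGaussPDF d μ) Q →
            ((Measure.pi fun _ : Fin n => Q) {v | ‖A v - μ‖ ≤ δ}).toReal ≥ 1 - τ := by
  obtain ⟨C, hC, h⟩ := stmt12_general
  refine ⟨C, hC, fun d ε δ τ n hd hε hδ hτ _ ↦ h d ε δ τ n hd hε ⟨hδ.1, hδ.2.le.trans ?_⟩ hτ⟩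
  rw [log_one_add_div_one_sub hε.2]
  exact sqrt_le_div_of_le hε.1 hε.2.le (le_neg_log_one_sub hε.2)
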